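/- Let n, N be positive integers, Ω ⊆ ℂⁿ a nonempty set, K a complex Hilbert space, σ : Ω → B(K) a function with ‖σ(z)‖ < 1 for every z ∈ Ω, F : Ω → B(K, ℂ^N) a function, and p : Ω → B(ℂ^N) a function satisfying I_N − p(z) p(w)* = F(z) (I_K − σ(z) σ(w)*) F(w)* for all z, w ∈ Ω. Then there exist a complex Hilbert space K′, a linear isometry ι : K → K′, and a unitary operator U on K′ ⊕ ℂ^N with block decomposition U = [[A, B], [C, D]] (A : K′ → K′, B : ℂ^N → K′, C : K′ → ℂ^N, D : ℂ^N → ℂ^N) such that, setting σ′(z) := ι ∘ σ(z) ∘ ι* ∈ B(K′), the operator I_{K′} − σ′(z) A is invertible and p(z) = D + C (I_{K′} − σ′(z) A)^{-1} σ′(z) B for all z ∈ Ω. -/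

import Mathlib

open ContinuousLinearMap

/-!
The proof is the lurking isometry argument. The factorization hypothesis says exactly that the
families `(F(w)* x, p(w)* x)` and `(σ(w)* F(w)* x, x)` in `H = K ⊕ ℂ^N`, indexed by `(w, x)`, have
the same Gram matrix. Hence there is a partial isometry `T` on `H` carrying the first family to the
second (`exists_partial`), and its Halmos dilation is a unitary on `H ⊕ H` that does the same
(`halmos`). Regrouping `(K ⊕ ℂ^N) ⊕ H` as `(K ⊕ H) ⊕ ℂ^N` gives a unitary `U` on `K' ⊕ ℂ^N` with
`K' = K ⊕ H` and `U (ι F(w)* x, p(w)* x) = (ι σ(w)* F(w)* x, x)` (`exists_unitary`). No comparison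
of the dimensions of orthogonal complements is needed.

Pairing `U (k, y)` with `U (ι F(z)* x, p(z)* x)` gives
`F(z) σ(z) ι* (A k + B y) + C k + D y = F(z) ι* k + p(z) y`. Since `F ι* σ' = F σ ι*`, this splits as
`C = F ι* (1 - σ' A)` and `p = D + F ι* σ' B`. Finally `‖σ' A‖ < 1`, so `1 - σ' A` is invertible,
`F ι* = C (1 - σ' A)⁻¹`, and the realization formula follows.
-/

open scoped InnerProductSpace

section LurkingIsometry

variable {H : Type*} [NormedAddCommGroup H] [InnerProductSpace ℂ H] [CompleteSpace H]

/-- Two families with the same Gram matrix are exchanged by a partial isometry `T` and its adjoint.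
Let `G` be the closed span of the pairs `(l i, r i)` in `H ⊕ H`, with coordinate maps
`a, b : G → H`. Equality of the Gram matrices gives `a* a = b* b`, while `a* a + b* b = 1`, so both
equal `1 / 2` and `T = 2 b a*` works. -/
theorem exists_partial {J : Type*} (l r : J → H)
    (h : ∀ i j, ⟪l i, l j⟫_ℂ = ⟪r i, r j⟫_ℂ) :
    ∃ T : H →L[ℂ] H, T ∘L adjoint T ∘L T = T ∧ ∀ i, T (l i) = r i ∧ adjoint T (r i) = l i := by
  let a₀ : WithLp 2 (H × H) →L[ℂ] H := WithLp.fstL 2 ℂ H H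
  let b₀ : WithLp 2 (H × H) →L[ℂ] H := WithLp.sndL 2 ℂ H H
  let S : Submodule ℂ (WithLp 2 (H × H)) :=
    Submodule.span ℂ (Set.range fun i => WithLp.toLp 2 (l i, r i))
  obtain ⟨G, hG⟩ : ∃ G : Submodule ℂ (WithLp 2 (H × H)), G = S.topologicalClosure := ⟨_, rfl⟩
  let Q : WithLp 2 (H × H) →L[ℂ] WithLp 2 (H × H) :=
    adjoint a₀ ∘L a₀ - adjoint b₀ ∘L b₀
  -- `Q` represents the form `⟪a u, a v⟫ - ⟪b u, b v⟫`, which vanishes on `S`, hence on `G`.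
  have hSQ : S ≤ Sᗮ.comap Q.toLinearMap := by
    refine Submodule.span_le.2 ?_
    rintro _ ⟨i, rfl⟩
    have : S ≤ (ℂ ∙ Q (WithLp.toLp 2 (l i, r i)))ᗮ := by
      refine Submodule.span_le.2 ?_
      rintro _ ⟨j, rfl⟩
      refine Submodule.mem_orthogonal_singleton_iff_inner_right.2 ?_
      simp [Q, inner_sub_left, adjoint_inner_left, a₀, b₀, h i j]
    exact fun u hu => (Submodule.mem_orthogonal_singleton_iff_inner_left.1 (this hu))
  have hGQ : G ≤ Gᗮ.comap Q.toLinearMap := by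
    have hGo : Gᗮ = Sᗮ := by rw [hG, Submodule.orthogonal_closure]
    rw [hGo, hG]
    refine Submodule.topologicalClosure_minimal _ hSQ ?_
    exact (Submodule.isClosed_orthogonal S).preimage Q.continuous
  have : CompleteSpace G := by
    rw [hG]
    exact (Submodule.isClosed_topologicalClosure S).completeSpace_coe
  let a : G →L[ℂ] H := a₀ ∘L G.subtypeL
  let b : G →L[ℂ] H := b₀ ∘L G.subtypeL
  have hab (u v : G) : ⟪a u, a v⟫_ℂ = ⟪b u, b v⟫_ℂ := by
    have := (Submodule.mem_orthogonal' _ _).1 (hGQ u.2) v v.2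
    simpa [Q, inner_sub_left, adjoint_inner_left, sub_eq_zero, a, b] using this
  have hsum (u v : G) : ⟪a u, a v⟫_ℂ + ⟪b u, b v⟫_ℂ = ⟪u, v⟫_ℂ := by
    simp [a, b, a₀, b₀, Submodule.coe_inner, WithLp.prod_inner_apply]
  have haa (u : G) : adjoint a (a u) = (1 / 2 : ℂ) • u := by
    refine ext_inner_right ℂ fun v => ?_
    have e : ⟪(1 / 2 : ℂ) • u, v⟫_ℂ = (starRingEnd ℂ) (1 / 2 : ℂ) * ⟪u, v⟫_ℂ :=
      inner_smul_left u v _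
    rw [adjoint_inner_left, e, ← hsum, ← hab, map_div₀, map_one, Complex.conj_ofNat]
    ring
  have hbb (u : G) : adjoint b (b u) = (1 / 2 : ℂ) • u := by
    refine ext_inner_right ℂ fun v => ?_
    have e : ⟪(1 / 2 : ℂ) • u, v⟫_ℂ = (starRingEnd ℂ) (1 / 2 : ℂ) * ⟪u, v⟫_ℂ :=
      inner_smul_left u v _
    rw [adjoint_inner_left, e, ← hsum, hab, map_div₀, map_one, Complex.conj_ofNat]
    ring
  have hT : adjoint ((2 : ℂ) • (b ∘L adjoint a)) = (2 : ℂ) • (a ∘L adjoint b) := by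
    rw [map_smulₛₗ, adjoint_comp, adjoint_adjoint, Complex.conj_ofNat]
  refine ⟨(2 : ℂ) • (b ∘L adjoint a), ?_, fun i => ?_⟩
  · rw [hT]
    ext x
    simp [haa, hbb]
  · let g : G := ⟨WithLp.toLp 2 (l i, r i),
      hG ▸ S.le_topologicalClosure (Submodule.subset_span ⟨i, rfl⟩)⟩
    have ha : l i = a g := rfl
    have hb : r i = b g := rfl
    rw [hT, ha, hb]
    simp [haa, hbb]

/-- The Halmos dilation of a partial isometry `T`: the matrix `[[T, 1 - TT*], [1 - T*T, T*]]` is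
unitary on `H ⊕ H`. The defect operators are projections, so no square roots appear, and they kill
the off-diagonal terms of the products whatever the sign of the last entry. -/
theorem halmos (T : H →L[ℂ] H) (hT : T ∘L adjoint T ∘L T = T) :
    ∃ V : WithLp 2 (H × H) ≃ₗᵢ[ℂ] WithLp 2 (H × H), ∀ u v,
      V (WithLp.toLp 2 (u, v)) = WithLp.toLp 2
        (T u + (v - T (adjoint T v)), (u - adjoint T (T u)) + adjoint T v) := by
  have h1 (x : H) : T (adjoint T (T x)) = T x := DFunLike.congr_fun hT x
  have h2 (x : H) : adjoint T (T (adjoint T x)) = adjoint T x := by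
    have := congrArg adjoint hT
    simp only [adjoint_comp, adjoint_adjoint] at this
    exact DFunLike.congr_fun this x
  let W (R : H →L[ℂ] H) : WithLp 2 (H × H) →ₗ[ℂ] WithLp 2 (H × H) :=
    { toFun := fun g => WithLp.toLp 2 (R g.fst + (g.snd - R (adjoint R g.snd)),
        (g.fst - adjoint R (R g.fst)) + adjoint R g.snd)
      map_add' := fun x y => by
        apply WithLp.ofLp_injective
        ext <;> simp <;> abel
      map_smul' := fun c x => by
        apply WithLp.ofLp_injective
        ext <;> simp [smul_sub] }
  -- `W T*` is the adjoint of `W T` and also its two-sided inverse.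
  have hW1 : W (adjoint T) ∘ₗ W T = LinearMap.id := by
    refine LinearMap.ext fun g => ?_
    apply WithLp.ofLp_injective
    ext <;> simp [W, h1, h2]
  have hW2 : W T ∘ₗ W (adjoint T) = LinearMap.id := by
    refine LinearMap.ext fun g => ?_
    apply WithLp.ofLp_injective
    ext <;> simp [W, h1, h2]
  have hin (x y : WithLp 2 (H × H)) : ⟪W T x, y⟫_ℂ = ⟪x, W (adjoint T) y⟫_ℂ := by
    simp only [W, LinearMap.coe_mk, AddHom.coe_mk, WithLp.prod_inner_apply, inner_add_left,
      inner_sub_left, inner_add_right, inner_sub_right, adjoint_inner_left, adjoint_inner_right,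
      adjoint_adjoint]
    simp [← adjoint_inner_right T, ← adjoint_inner_left T]
    ring
  refine ⟨(LinearEquiv.ofLinearMap (W T) (W (adjoint T)) hW2 hW1).isometryOfInner fun x y => ?_,
    fun u v => rfl⟩
  have := hin x (W T y)
  rw [← LinearMap.comp_apply, hW1] at this
  exact this

variable {K E : Type} [NormedAddCommGroup K] [InnerProductSpace ℂ K]
  [NormedAddCommGroup E] [InnerProductSpace ℂ E]

/-- The regrouping isometry `(K ⊕ H) ⊕ E ≃ (K ⊕ E) ⊕ H`. -/
noncomputable def swapIso (H : Type) [NormedAddCommGroup H] [InnerProductSpace ℂ H] :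
    WithLp 2 (WithLp 2 (K × H) × E) ≃ₗᵢ[ℂ] WithLp 2 (WithLp 2 (K × E) × H) where
  toFun g := WithLp.toLp 2 (WithLp.toLp 2 (g.fst.fst, g.snd), g.fst.snd)
  invFun g := WithLp.toLp 2 (WithLp.toLp 2 (g.fst.fst, g.snd), g.fst.snd)
  left_inv _ := rfl
  right_inv _ := rfl
  map_add' _ _ := rfl
  map_smul' _ _ := rfl
  norm_map' g := by
    rw [← sq_eq_sq₀ (norm_nonneg _) (norm_nonneg _)]
    simp only [WithLp.prod_norm_sq_eq_of_L2]
    change ‖g.fst.fst‖ ^ 2 + ‖g.snd‖ ^ 2 + ‖g.fst.snd‖ ^ 2 = _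
    ring

/-- The isometric inclusion of `K` as the first summand of the Hilbert sum `K ⊕ H`. -/
noncomputable def inlIso (H : Type) [NormedAddCommGroup H] [InnerProductSpace ℂ H] :
    K →ₗᵢ[ℂ] WithLp 2 (K × H) where
  toFun k := WithLp.toLp 2 (k, 0)
  map_add' x y := by apply WithLp.ofLp_injective; ext <;> simp
  map_smul' c x := by apply WithLp.ofLp_injective; ext <;> simp
  norm_map' g := by
    rw [← sq_eq_sq₀ (norm_nonneg _) (norm_nonneg _)]
    simp

/-- The isometric inclusion of `H` as the second summand of the Hilbert sum `K ⊕ H`. -/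
noncomputable def inrIso (H : Type) [NormedAddCommGroup H] [InnerProductSpace ℂ H] :
    H →ₗᵢ[ℂ] WithLp 2 (K × H) where
  toFun k := WithLp.toLp 2 (0, k)
  map_add' x y := by apply WithLp.ofLp_injective; ext <;> simp
  map_smul' c x := by apply WithLp.ofLp_injective; ext <;> simp
  norm_map' g := by
    rw [← sq_eq_sq₀ (norm_nonneg _) (norm_nonneg _)]
    simp

/-- Two families in `K ⊕ E` with the same Gram matrix are related by a unitary of `K' ⊕ E`, where
only the summand `K` has been enlarged. -/
theorem exists_unitary [CompleteSpace K] [CompleteSpace E] {J : Type*} (r₁ l₁ : J → K)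
    (r₂ l₂ : J → E)
    (h : ∀ i j, ⟪r₁ i, r₁ j⟫_ℂ + ⟪r₂ i, r₂ j⟫_ℂ = ⟪l₁ i, l₁ j⟫_ℂ + ⟪l₂ i, l₂ j⟫_ℂ) :
    ∃ (K' : Type) (_ : NormedAddCommGroup K') (_ : InnerProductSpace ℂ K')
      (_ : CompleteSpace K') (ι : K →ₗᵢ[ℂ] K')
      (U : WithLp 2 (K' × E) ≃ₗᵢ[ℂ] WithLp 2 (K' × E)),
      ∀ i, U (WithLp.toLp 2 (ι (r₁ i), r₂ i)) = WithLp.toLp 2 (ι (l₁ i), l₂ i) := by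
  obtain ⟨T, hT, hTi⟩ := exists_partial (H := WithLp 2 (K × E))
    (fun i => WithLp.toLp 2 (r₁ i, r₂ i)) (fun i => WithLp.toLp 2 (l₁ i, l₂ i))
    (fun i j => by simpa [WithLp.prod_inner_apply] using h i j)
  obtain ⟨V, hV⟩ := halmos T hT
  refine ⟨WithLp 2 (K × WithLp 2 (K × E)), inferInstance, inferInstance, inferInstance,
    inlIso _, (swapIso _).trans (V.trans (swapIso _).symm), fun i => ?_⟩
  have h0 : V (WithLp.toLp 2 (WithLp.toLp 2 (r₁ i, r₂ i), 0)) =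
      WithLp.toLp 2 (WithLp.toLp 2 (l₁ i, l₂ i), 0) := by
    rw [hV, (hTi i).1, (hTi i).2]
    simp
  change (swapIso _).symm (V (WithLp.toLp 2 (WithLp.toLp 2 (r₁ i, r₂ i), 0))) = _
  rw [h0]
  rfl
end LurkingIsometry

/-- lurking isometry / transfer-function realization. If
`I - p(z)p(w)* = F(z)(I - σ(z)σ(w)*)F(w)*` on a nonempty set `Ω ⊆ ℂⁿ`, with
`‖σ(z)‖ < 1` everywhere, then there are a Hilbert space `K'`, an isometry `ι : K → K'`
and a unitary `U = [[A, B], [C, D]]` on `K' ⊕ ℂ^N` realizing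
`p(z) = D + C (I - σ'(z)A)⁻¹ σ'(z) B`, where `σ'(z) = ι σ(z) ι*`. -/
theorem statement1
    {n N : ℕ} (hn : 0 < n) (hN : 0 < N)
    (Ω : Set (EuclideanSpace ℂ (Fin n))) (hΩ : Ω.Nonempty)
    {K : Type} [NormedAddCommGroup K] [InnerProductSpace ℂ K] [CompleteSpace K]
    (σ : Ω → K →L[ℂ] K) (hσ : ∀ z : Ω, ‖σ z‖ < 1)
    (F : Ω → K →L[ℂ] EuclideanSpace ℂ (Fin N))
    (p : Ω → EuclideanSpace ℂ (Fin N) →L[ℂ] EuclideanSpace ℂ (Fin N))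
    (hfac : ∀ z w : Ω,
      1 - p z ∘L adjoint (p w) = F z ∘L (1 - σ z ∘L adjoint (σ w)) ∘L adjoint (F w)) :
    ∃ (K' : Type) (_ : NormedAddCommGroup K') (_ : InnerProductSpace ℂ K')
      (_ : CompleteSpace K') (ι : K →ₗᵢ[ℂ] K')
      (U : WithLp 2 (K' × EuclideanSpace ℂ (Fin N)) ≃ₗᵢ[ℂ]
        WithLp 2 (K' × EuclideanSpace ℂ (Fin N)))
      (A : K' →L[ℂ] K') (B : EuclideanSpace ℂ (Fin N) →L[ℂ] K')
      (C : K' →L[ℂ] EuclideanSpace ℂ (Fin N))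
      (D : EuclideanSpace ℂ (Fin N) →L[ℂ] EuclideanSpace ℂ (Fin N)),
      (∀ (k : K') (x : EuclideanSpace ℂ (Fin N)),
        U ((WithLp.equiv 2 (K' × EuclideanSpace ℂ (Fin N))).symm (k, x)) =
          (WithLp.equiv 2 (K' × EuclideanSpace ℂ (Fin N))).symm (A k + B x, C k + D x)) ∧
      ∀ z : Ω,
        IsUnit (1 - (ι.toContinuousLinearMap ∘L σ z ∘L adjoint ι.toContinuousLinearMap) ∘L A) ∧
        p z = D + C ∘L
          Ring.inverse
            (1 - (ι.toContinuousLinearMap ∘L σ z ∘L adjoint ι.toContinuousLinearMap) ∘L A) ∘L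
          (ι.toContinuousLinearMap ∘L σ z ∘L adjoint ι.toContinuousLinearMap) ∘L B := by
  have hinner (i j : Ω × EuclideanSpace ℂ (Fin N)) :
      ⟪adjoint (F i.1) i.2, adjoint (F j.1) j.2⟫_ℂ + ⟪adjoint (p i.1) i.2, adjoint (p j.1) j.2⟫_ℂ =
      ⟪adjoint (σ i.1) (adjoint (F i.1) i.2), adjoint (σ j.1) (adjoint (F j.1) j.2)⟫_ℂ +
        ⟪i.2, j.2⟫_ℂ := by
    have := congrArg (fun T => ⟪i.2, T j.2⟫_ℂ) (hfac i.1 j.1)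
    simp only [sub_apply, one_apply_eq_self, comp_apply, map_sub, inner_sub_right] at this
    simp only [adjoint_inner_left]
    linear_combination -this
  obtain ⟨K', _, _, _, ι, U, hU⟩ := exists_unitary
    (fun i : Ω × EuclideanSpace ℂ (Fin N) => adjoint (F i.1) i.2)
    (fun i => adjoint (σ i.1) (adjoint (F i.1) i.2))
    (fun i => adjoint (p i.1) i.2) (fun i => i.2) hinner
  let E := EuclideanSpace ℂ (Fin N)
  let Uc : WithLp 2 (K' × E) →L[ℂ] WithLp 2 (K' × E) := U.toLinearIsometry.toContinuousLinearMap
  let A : K' →L[ℂ] K' := WithLp.fstL 2 ℂ K' E ∘L Uc ∘L (inlIso E).toContinuousLinearMap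
  let B : E →L[ℂ] K' := WithLp.fstL 2 ℂ K' E ∘L Uc ∘L (inrIso E).toContinuousLinearMap
  let C : K' →L[ℂ] E := WithLp.sndL 2 ℂ K' E ∘L Uc ∘L (inlIso E).toContinuousLinearMap
  let D : E →L[ℂ] E := WithLp.sndL 2 ℂ K' E ∘L Uc ∘L (inrIso E).toContinuousLinearMap
  have hblock (k : K') (x : E) :
      U (WithLp.toLp 2 (k, x)) = WithLp.toLp 2 (A k + B x, C k + D x) := by
    have : WithLp.toLp 2 (k, x) = (inlIso E k : WithLp 2 (K' × E)) + inrIso E x := by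
      apply WithLp.ofLp_injective
      ext <;> simp [inlIso, inrIso]
    rw [this, map_add]
    rfl
  have hA : ‖A‖ ≤ 1 := by
    refine A.opNorm_le_bound zero_le_one fun k => ?_
    calc ‖A k‖ ≤ ‖U (inlIso E k)‖ := WithLp.norm_fst_le _ _
      _ = 1 * ‖k‖ := by rw [U.norm_map, LinearIsometry.norm_map, one_mul]
  refine ⟨K', _, _, ‹_›, ι, U, A, B, C, D, hblock, fun z => ?_⟩
  set ιc := ι.toContinuousLinearMap with hιc
  have hι : ‖ιc‖ ≤ 1 := ι.norm_toContinuousLinearMap_le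
  have hιι (k : K) : adjoint ιc (ιc k) = k := DFunLike.congr_fun ι.adjoint_comp_self k
  set s := ιc ∘L σ z ∘L adjoint ιc with hs
  have hsn : ‖s‖ < 1 := by
    refine lt_of_le_of_lt ?_ (hσ z)
    calc ‖s‖ ≤ ‖ιc‖ * (‖σ z‖ * ‖adjoint ιc‖) :=
          (opNorm_comp_le _ _).trans (by gcongr; exact opNorm_comp_le _ _)
      _ ≤ 1 * (‖σ z‖ * 1) := by
          rw [LinearIsometryEquiv.norm_map]; gcongr
      _ = ‖σ z‖ := by ring
  have hunit : IsUnit (1 - s ∘L A) := by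
    refine isUnit_one_sub_of_norm_lt_one ?_
    calc ‖s ∘L A‖ ≤ ‖s‖ * ‖A‖ := opNorm_comp_le _ _
      _ ≤ ‖s‖ * 1 := by gcongr
      _ < 1 := by rwa [mul_one]
  refine ⟨hunit, ?_⟩
  have key (k : K') (y : E) :
      F z (σ z (adjoint ιc (A k + B y))) + (C k + D y) = F z (adjoint ιc k) + p z y := by
    refine ext_inner_right ℂ fun x => ?_
    have h1 := U.inner_map_map (WithLp.toLp 2 (k, y))
      (WithLp.toLp 2 (ι (adjoint (F z) x), adjoint (p z) x))
    rw [hU (z, x), hblock] at h1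
    simp only [WithLp.prod_inner_apply] at h1
    rw [inner_add_left, inner_add_left (F z _), ← adjoint_inner_right, ← adjoint_inner_right,
      ← adjoint_inner_right (F z), ← adjoint_inner_right (p z), adjoint_inner_left ιc,
      adjoint_inner_left ιc]
    exact h1
  -- `F ι* σ' = F σ ι*`, because `ι* ι = 1`.
  have hFs (v : K') : F z (adjoint ιc (s v)) = F z (σ z (adjoint ιc v)) := by
    simp [s, hιι]
  have hC : C = (F z ∘L adjoint ιc) ∘L (1 - s ∘L A) := by
    ext1 k
    have := key k 0
    simp only [map_zero, add_zero] at this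
    simp only [comp_apply, sub_apply, map_sub, hFs]
    exact eq_sub_of_add_eq' this
  have hCinv : C ∘L Ring.inverse (1 - s ∘L A) = F z ∘L adjoint ιc := by
    have : (1 - s ∘L A) ∘L Ring.inverse (1 - s ∘L A) = 1 := Ring.mul_inverse_cancel _ hunit
    rw [hC, comp_assoc, this]
    rfl
  rw [← comp_assoc, hCinv]
  ext1 y
  have := key 0 y
  simp only [map_zero, zero_add] at this
  simp only [comp_apply, add_apply, hFs]
  rw [← this, add_comm]
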